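/- Let A_1, …, A_K be nonempty pairwise disjoint subsets of {1, …, d} with |A_k| ≥ 2 for each k and 1 ≤ K < d. Then the function N(x) := Σ_{k=1}^K max_{i ∈ A_k} |x_i| + Σ_{i ∈ {1,…,d} \ (A_1 ∪ … ∪ A_K)} |x_i| is an idempotent D-norm on ℝ^d: there exists a probability space carrying a generator Z with E(max_{1≤i≤d} |x_i| Z_i) = N(x) for all x ∈ ℝ^d, and for Z' an independent copy of Z, E(max_{1≤i≤d} |x_i| Z_i Z'_i) = N(x) for all x ∈ ℝ^d. -/

import Mathlib

open MeasureTheory ProbabilityTheory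

/-!
Pick an index `j` uniformly at random and let `Z` be the indicator of the block of `j`, rescaled to
have mean one in each coordinate. The maximum of the `|xᵢ| Zᵢ` is then a rescaled maximum over the
block of `j`, and averaging over `j` gives the sum of the block maxima. If `Z'` comes from an
independent index `j'`, then `Z Z' = Z'ⱼ Z`: both sides vanish unless `j'` falls in the block of
`j`. Conditionally on `j` the factor `Z'ⱼ` has mean one, so passing from `Z` to `Z Z'` leaves the
D-norm unchanged. The mixture in the theorem is the case where the blocks are the given sets
together with the singletons of the remaining indices.
-/

universe u v w

section DNorm

variable {ι : Type u} {Ω : Type w} [MeasurableSpace Ω]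

/-- Generators of D-norms: measurable, almost surely nonnegative random vectors whose coordinates
have mean one. -/
structure IsDNormGenerator (μ : Measure Ω) (Z : Ω → ι → ℝ) : Prop where
  measurable : Measurable Z
  ae_nonneg : ∀ i, ∀ᵐ ω ∂μ, 0 ≤ Z ω i
  integrable : ∀ i, Integrable (fun ω => Z ω i) μ
  integral_eq_one : ∀ i, ∫ ω, Z ω i ∂μ = 1

/-- The D-norm `x ↦ E (maxᵢ |xᵢ| Zᵢ)` generated by `Z`. -/
noncomputable def dNorm (μ : Measure Ω) (Z : Ω → ι → ℝ) (x : ι → ℝ) : ℝ :=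
  ∫ ω, ⨆ i, |x i| * Z ω i ∂μ

/-- Idempotent D-norms: `N` is generated both by some generator `Z` and by the coordinatewise
product of `Z` with an independent copy `Z'`. One pair `(Z, Z')` is enough, since the D-norm of a
product depends only on the joint law. -/
def IsIdempotentDNorm (N : (ι → ℝ) → ℝ) : Prop :=
  ∃ (Ω : Type w) (_ : MeasurableSpace Ω) (μ : Measure Ω), IsProbabilityMeasure μ ∧
    ∃ Z Z' : Ω → ι → ℝ, IsDNormGenerator μ Z ∧ Measurable Z' ∧
      IndepFun Z Z' μ ∧ μ.map Z' = μ.map Z ∧ dNorm μ Z = N ∧ dNorm μ (Z * Z') = N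

variable {μ : Measure Ω} {Z : Ω → ι → ℝ}

theorem IsDNormGenerator.comp_fst {Ω' : Type*} [MeasurableSpace Ω'] {ν : Measure Ω'}
    [IsProbabilityMeasure ν] [SFinite μ] (hZ : IsDNormGenerator μ Z) :
    IsDNormGenerator (μ.prod ν) (fun ω => Z ω.1) where
  measurable := hZ.measurable.comp measurable_fst
  ae_nonneg i := Measure.quasiMeasurePreserving_fst.ae (hZ.ae_nonneg i)
  integrable i := (hZ.integrable i).comp_fst ν
  integral_eq_one i := by
    rw [integral_fun_fst fun ω => Z ω i, hZ.integral_eq_one, probReal_univ, one_smul]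

theorem dNorm_comp_fst {Ω' : Type*} [MeasurableSpace Ω'] {ν : Measure Ω'}
    [IsProbabilityMeasure ν] [SFinite μ] : dNorm (μ.prod ν) (fun ω => Z ω.1) = dNorm μ Z := by
  ext x
  rw [dNorm, integral_fun_fst fun ω => ⨆ i, |x i| * Z ω i, probReal_univ, one_smul, dNorm]

theorem IsDNormGenerator.isIdempotentDNorm [IsProbabilityMeasure μ] (hZ : IsDNormGenerator μ Z)
    (hmul : dNorm (μ.prod μ) (fun ω => Z ω.1 * Z ω.2) = dNorm μ Z) :
    IsIdempotentDNorm.{u, w} (dNorm μ Z) := by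
  have hmap : (μ.prod μ).map (Z ∘ Prod.snd) = (μ.prod μ).map (Z ∘ Prod.fst) := by
    rw [← Measure.map_map hZ.measurable measurable_snd,
      ← Measure.map_map hZ.measurable measurable_fst,
      measurePreserving_snd.map_eq, measurePreserving_fst.map_eq]
  exact ⟨Ω × Ω, inferInstance, μ.prod μ, inferInstance, Z ∘ Prod.fst, Z ∘ Prod.snd,
    hZ.comp_fst, hZ.measurable.comp measurable_snd, indepFun_prod hZ.measurable hZ.measurable,
    hmap, dNorm_comp_fst, hmul⟩

end DNorm

theorem integral_uniformOn_univ {Ω E : Type*} [Fintype Ω] [MeasurableSpace Ω]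
    [MeasurableSingletonClass Ω] [NormedAddCommGroup E] [NormedSpace ℝ E] [CompleteSpace E]
    (f : Ω → E) :
    ∫ ω, f ω ∂uniformOn Set.univ = (Fintype.card Ω : ℝ)⁻¹ • ∑ ω, f ω := by
  simp [uniformOn, ProbabilityTheory.cond, integral_smul_measure, integral_count]

theorem iSup_mem_singleton_of_nonneg {α : Type*} {f : α → ℝ} {a : α} (ha : 0 ≤ f a) :
    ⨆ i ∈ ({a} : Finset α), f i = f a := by
  rw [Finset.ciSup_eq_max'_image f ⟨a, by simpa using ha⟩ (by simp)]
  simp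

section Partition

variable {ι : Type u} [DecidableEq ι]

theorem sum_comp_part {M : Type*} [AddCommMonoid M] {s : Finset ι} (P : Finpartition s)
    (f : Finset ι → M) : ∑ i ∈ s, f (P.part i) = ∑ B ∈ P.parts, B.card • f B := by
  rw [← Finset.sum_fiberwise_of_maps_to fun i hi => P.part_mem.2 hi]
  refine Finset.sum_congr rfl fun B hB => ?_
  have hfiber : {i ∈ s | P.part i = B} = B := by
    ext i
    simpa [P.part_eq_iff_mem hB] using fun hi => P.subset hB hi
  rw [Finset.sum_congr rfl fun i hi => by rw [(Finset.mem_filter.1 hi).2], hfiber,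
    Finset.sum_const]

variable [Fintype ι]

/-- The generator attached to a partition: at the sample point `j` it is the indicator of the block
of `j`, divided by the probability of that block under the uniform distribution on `ι`. -/
noncomputable def partitionGenerator (P : Finpartition (Finset.univ : Finset ι)) (j i : ι) : ℝ :=
  if i ∈ P.part j then (Fintype.card ι : ℝ) / (P.part j).card else 0

variable (P : Finpartition (Finset.univ : Finset ι))

theorem partitionGenerator_nonneg (j i : ι) : 0 ≤ partitionGenerator P j i := by
  unfold partitionGenerator
  positivity

theorem partitionGenerator_comm (j i : ι) :
    partitionGenerator P j i = partitionGenerator P i j := by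
  simp only [partitionGenerator, P.mem_part_iff_part_eq_part (Finset.mem_univ _)
    (Finset.mem_univ _), eq_comm (a := P.part j)]
  split_ifs with h
  · rw [h]
  · rfl

theorem partitionGenerator_mul (j j' i : ι) :
    partitionGenerator P j i * partitionGenerator P j' i =
      partitionGenerator P j' j * partitionGenerator P j i := by
  simp only [partitionGenerator, P.mem_part_iff_part_eq_part (Finset.mem_univ _)
    (Finset.mem_univ _)]
  by_cases h : P.part i = P.part j <;> simp [h, mul_comm]

theorem sum_partitionGenerator (j : ι) : ∑ i, partitionGenerator P j i = Fintype.card ι := by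
  have hcard : ((P.part j).card : ℝ) ≠ 0 := by
    exact_mod_cast (P.part_nonempty.2 (Finset.mem_univ j)).card_ne_zero
  simp only [partitionGenerator, Finset.sum_ite_mem, Finset.univ_inter, Finset.sum_const,
    nsmul_eq_mul]
  exact mul_div_cancel₀ _ hcard

theorem iSup_mul_partitionGenerator (y : ι → ℝ) (j : ι) :
    ⨆ i, y i * partitionGenerator P j i =
      (Fintype.card ι / (P.part j).card : ℝ) * ⨆ i ∈ P.part j, y i := by
  rw [Real.mul_iSup_of_nonneg (by positivity)]
  refine iSup_congr fun i => ?_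
  by_cases h : i ∈ P.part j <;> simp [partitionGenerator, h, mul_comm]

section Discrete

variable [MeasurableSpace ι] [DiscreteMeasurableSpace ι] [Nonempty ι]

theorem isDNormGenerator_partitionGenerator :
    IsDNormGenerator (uniformOn Set.univ) (partitionGenerator P) where
  measurable := .of_discrete
  ae_nonneg i := ae_of_all _ fun j => partitionGenerator_nonneg P j i
  integrable _ := .of_finite
  integral_eq_one i := by
    simp_rw [partitionGenerator_comm P _ i]
    rw [integral_uniformOn_univ, sum_partitionGenerator, smul_eq_mul,
      inv_mul_cancel₀ (by exact_mod_cast Fintype.card_ne_zero)]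

theorem dNorm_partitionGenerator :
    dNorm (uniformOn Set.univ) (partitionGenerator P) =
      fun x => ∑ B ∈ P.parts, ⨆ i ∈ B, |x i| := by
  ext x
  have hι : (Fintype.card ι : ℝ) ≠ 0 := by exact_mod_cast Fintype.card_ne_zero
  simp_rw [dNorm, iSup_mul_partitionGenerator]
  rw [integral_uniformOn_univ,
    sum_comp_part P fun B => (Fintype.card ι / B.card : ℝ) * ⨆ i ∈ B, |x i|, Finset.smul_sum]
  refine Finset.sum_congr rfl fun B hB => ?_
  have hBcard : (B.card : ℝ) ≠ 0 := by
    exact_mod_cast (P.nonempty_of_mem_parts hB).card_ne_zero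
  rw [smul_eq_mul, nsmul_eq_mul]
  field_simp

theorem dNorm_partitionGenerator_mul :
    dNorm ((uniformOn Set.univ).prod (uniformOn Set.univ))
        (fun ω : ι × ι => partitionGenerator P ω.1 * partitionGenerator P ω.2) =
      dNorm (uniformOn Set.univ) (partitionGenerator P) := by
  ext x
  have hfactor (j j' : ι) :
      ⨆ i, |x i| * (partitionGenerator P j * partitionGenerator P j') i =
        partitionGenerator P j' j * ⨆ i, |x i| * partitionGenerator P j i := by
    rw [Real.mul_iSup_of_nonneg (partitionGenerator_nonneg P j' j)]
    exact iSup_congr fun i => by rw [Pi.mul_apply, partitionGenerator_mul, mul_left_comm]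
  simp_rw [dNorm, hfactor]
  rw [integral_prod _ .of_finite]
  simp_rw [integral_mul_const, (isDNormGenerator_partitionGenerator P).integral_eq_one, one_mul]

end Discrete

theorem isIdempotentDNorm_sum_parts [Nonempty ι] :
    IsIdempotentDNorm.{u, u} fun x : ι → ℝ => ∑ B ∈ P.parts, ⨆ i ∈ B, |x i| := by
  let _ : MeasurableSpace ι := ⊤
  rw [← dNorm_partitionGenerator P]
  exact (isDNormGenerator_partitionGenerator P).isIdempotentDNorm (dNorm_partitionGenerator_mul P)

end Partition

section Mixture

variable {ι : Type u} {κ : Type v} [DecidableEq ι] [Fintype ι] [Fintype κ] {A : κ → Finset ι}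

theorem supIndep_option_elim_compl (hdisj : Pairwise (Function.onFun Disjoint A)) :
    Finset.univ.SupIndep fun k : Option κ => k.elim (Finset.univ \ Finset.univ.biUnion A) A := by
  rw [Finset.supIndep_iff_pairwiseDisjoint]
  have hcompl (k : κ) : Disjoint (Finset.univ \ Finset.univ.biUnion A) (A k) :=
    Finset.sdiff_disjoint.mono_right (Finset.subset_biUnion_of_mem A (Finset.mem_univ k))
  rintro (_ | k) - (_ | l) - hkl
  · exact absurd rfl hkl
  · exact hcompl l
  · exact (hcompl k).symm
  · exact hdisj (mt (congrArg some) hkl)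

theorem sup_option_elim_compl (A : κ → Finset ι) :
    (Finset.univ.sup fun k : Option κ => k.elim (Finset.univ \ Finset.univ.biUnion A) A) =
      Finset.univ := by
  ext i
  simpa [Finset.mem_sup, Option.exists] using (em (∃ k, i ∈ A k)).symm.imp_left not_exists.1

/-- The partition of `ι` into the sets `A k` and the singletons of the indices outside all of
them; the value `none` of `Option κ` stands for the latter indices taken together. -/
def partitionWithSingletons (hne : ∀ k, (A k).Nonempty)
    (hdisj : Pairwise (Function.onFun Disjoint A)) : Finpartition (Finset.univ : Finset ι) :=
  (Finpartition.combine
    (fun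
      | none => ⊥
      | some k => .indiscrete (hne k).ne_empty)
    (supIndep_option_elim_compl hdisj)).copy (sup_option_elim_compl A)

theorem sum_parts_partitionWithSingletons {M : Type*} [AddCommMonoid M]
    (hne : ∀ k, (A k).Nonempty) (hdisj : Pairwise (Function.onFun Disjoint A))
    (f : Finset ι → M) :
    ∑ B ∈ (partitionWithSingletons hne hdisj).parts, f B =
      (∑ k, f (A k)) + ∑ i ∈ Finset.univ \ Finset.univ.biUnion A, f {i} := by
  calc
    _ = (∑ B ∈ (⊥ : Finpartition (Finset.univ \ Finset.univ.biUnion A)).parts, f B) +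
          ∑ k, ∑ B ∈ (Finpartition.indiscrete (hne k).ne_empty).parts, f B :=
      (Finpartition.sum_combine _ (supIndep_option_elim_compl hdisj) f).trans
        (Fintype.sum_option _)
    _ = _ := by simp [Finpartition.parts_bot, add_comm]

theorem mixture_is_idempotent_dNorm_general [Nonempty ι] (hne : ∀ k, (A k).Nonempty)
    (hdisj : Pairwise (Function.onFun Disjoint A)) :
    IsIdempotentDNorm.{u, u} fun x : ι → ℝ =>
      (∑ k, ⨆ i ∈ A k, |x i|) + ∑ i ∈ Finset.univ \ Finset.univ.biUnion A, |x i| := by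
  have hsingleton (x : ι → ℝ) (i : ι) : ⨆ j ∈ ({i} : Finset ι), |x j| = |x i| :=
    iSup_mem_singleton_of_nonneg (f := fun j => |x j|) (abs_nonneg _)
  simpa only [sum_parts_partitionWithSingletons, hsingleton] using
    isIdempotentDNorm_sum_parts (partitionWithSingletons hne hdisj)

end Mixture

/-- For any nonempty pairwise disjoint sets `A₁, …, A_K` with `|A_k| ≥ 2`, the mixture
of sup-norms and the L¹-norm is an idempotent D-norm on `ℝ^d`. -/
theorem mixture_is_idempotent_dNorm {d K : ℕ} (hd : 0 < d) (hK : 1 ≤ K) (hKd : K < d)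
    (A : Fin K → Finset (Fin d))
    (hAcard : ∀ k, 2 ≤ (A k).card)
    (hAdisj : ∀ k l, k ≠ l → Disjoint (A k) (A l)) :
    ∃ (Ω : Type) (_ : MeasurableSpace Ω) (μ : Measure Ω),
      IsProbabilityMeasure μ ∧
      ∃ Z Z' : Ω → Fin d → ℝ,
        Measurable Z ∧ Measurable Z' ∧
        (∀ i, ∀ᵐ ω ∂μ, 0 ≤ Z ω i) ∧
        (∀ i, Integrable (fun ω => Z ω i) μ) ∧
        (∀ i, ∫ ω, Z ω i ∂μ = 1) ∧
        IndepFun Z Z' μ ∧ μ.map Z' = μ.map Z ∧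
        (∀ x : Fin d → ℝ,
          (∫ ω, ⨆ i, |x i| * Z ω i ∂μ) =
            (∑ k : Fin K, ⨆ i ∈ A k, |x i|) +
              ∑ i ∈ Finset.univ \ Finset.univ.biUnion A, |x i|) ∧
        (∀ x : Fin d → ℝ,
          (∫ ω, ⨆ i, |x i| * (Z ω i * Z' ω i) ∂μ) =
            (∑ k : Fin K, ⨆ i ∈ A k, |x i|) +
              ∑ i ∈ Finset.univ \ Finset.univ.biUnion A, |x i|) := by
  have : Nonempty (Fin d) := Fin.pos_iff_nonempty.1 hd
  obtain ⟨Ω, _, μ, hμ, Z, Z', hZ, hZ', hindep, hmap, hN, hmul⟩ :=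
    mixture_is_idempotent_dNorm_general
      (fun k => Finset.card_pos.1 (two_pos.trans_le (hAcard k))) hAdisj
  exact ⟨Ω, _, μ, hμ, Z, Z', hZ.measurable, hZ', hZ.ae_nonneg, hZ.integrable, hZ.integral_eq_one,
    hindep, hmap, congrFun hN, congrFun hmul⟩
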